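/- Fix an integer k ≥ 2. The Wronski map (p,q) ↦ p′q − q′p is a bijection from the set Int of all pairs (p,q) of monic real polynomials such that deg p = k, deg q = k−1, the coefficient of X^{k−1} in p is 0, and all roots of p and q are real, simple and strictly interlacing, onto the set Pol of all monic real polynomials u of degree 2k−2 satisfying u(x) > 0 for every x ∈ ℝ. -/

import Mathlib

/-!
Write `n = k - 1` and let `q = ∏ (X - rᵢ)`, `qᵢ = q / (X - rᵢ)`. Strict interlacing of monic `p`
and `q` means exactly that `p / q = X + a - ∑ cᵢ / (X - rᵢ)` with all `cᵢ > 0`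
(`exists_pickPoly_of_interlacing`, `interlacing_of_pickPoly`), and then
`p' q - q' p = q² + ∑ cᵢ qᵢ²`, which is monic of degree `2n` and positive. The condition on the
coefficient of `X ^ (k - 1)` in `p` fixes `a`. So the claim is that every positive monic `u` of degree
`2n` is `q² + ∑ cᵢ qᵢ²` for exactly one choice of `r₁ < ⋯ < rₙ` and `cᵢ > 0`.

Existence. The functional `∏_{i ≠ j} |rᵢ - rⱼ| / ∏ u(rᵢ)` tends to zero at infinity and vanishes on the
diagonals, so it has a maximizer with distinct `rᵢ`. Its critical equations
`u'(rᵢ) / u(rᵢ) = 2 qᵢ'(rᵢ) / qᵢ(rᵢ)` say that, with `cᵢ = u(rᵢ) / qᵢ(rᵢ)²`, the polynomial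
`u - q² - ∑ cᵢ qᵢ²` has a double zero at each `rᵢ`. Its degree is less than `2n`, so it is zero
(`exists_representation`).

Uniqueness. On the upper half-plane `D = Im (p * conj q)` equals `Im z * (|q|² + ∑ cᵢ |qᵢ|²) > 0` and
satisfies `Δ log D = -|p' q - q' p|² / D²`. For two pairs with the same Wronskian, `log (D₁ / D₂)` tends
to zero at the real axis and at infinity, and it is subharmonic where it is positive; the maximum
principle gives `D₁ = D₂` (`bez_le_of_wronskian_eq`). Polarizing `|q|² + ∑ cᵢ |qᵢ|²` recovers `q` as a
leading coefficient, and then the `cᵢ` (`pickPoly_unique`).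
-/

open Polynomial

/-- The monic real polynomial with prescribed roots. -/
noncomputable def rootPoly {n : ℕ} (r : Fin n → ℝ) : Polynomial ℝ :=
  ∏ i, (X - C (r i))

/-- Inclusion `Fin (k-1) → Fin k` (index of the left endpoint). -/
def finLo {k : ℕ} (i : Fin (k - 1)) : Fin k := ⟨i.1, by have := i.2; omega⟩

/-- Index of the right endpoint. -/
def finHi {k : ℕ} (i : Fin (k - 1)) : Fin k := ⟨i.1 + 1, by have := i.2; omega⟩

/-- The Wronskian `W(p,q) = p'q - q'p`. -/
noncomputable def wron (p q : Polynomial ℝ) : Polynomial ℝ :=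
  derivative p * q - derivative q * p

open Filter Topology ComplexConjugate

/-! ### The maximum principle -/

lemma nonpos_of_isLocalMax_of_hasDerivAt {G G' : ℝ → ℝ} {s : ℝ}
    (h1 : ∀ᶠ t in 𝓝 (0 : ℝ), HasDerivAt G (G' t) t) (h2 : HasDerivAt G' s 0)
    (hmax : IsLocalMax G 0) : s ≤ 0 := by
  by_contra hs
  push Not at hs
  have hd : deriv G =ᶠ[𝓝 0] G' := h1.mono fun t ht => ht.deriv
  have hdd : deriv (deriv G) 0 = s := by rw [hd.deriv_eq]; exact h2.deriv
  have hmin : IsLocalMin G 0 :=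
    isLocalMin_of_deriv_deriv_pos (by rw [hdd]; exact hs) hmax.deriv_eq_zero
      h1.self_of_nhds.continuousAt
  have hconst : G =ᶠ[𝓝 0] fun _ => G 0 := by
    filter_upwards [hmax, hmin] with t ha hb using le_antisymm ha hb
  have h0 : deriv G =ᶠ[𝓝 0] fun _ => 0 := by
    simpa using hconst.deriv
  have : deriv (deriv G) 0 = 0 := by rw [h0.deriv_eq]; simp
  linarith

lemma second_deriv_log_ratio_nonpos {A A' B B' N N' : ℝ → ℝ} {a b n ε : ℝ}
    (hA : ∀ t, HasDerivAt A (A' t) t) (hA' : HasDerivAt A' a 0)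
    (hB : ∀ t, HasDerivAt B (B' t) t) (hB' : HasDerivAt B' b 0)
    (hN : ∀ t, HasDerivAt N (N' t) t) (hN' : HasDerivAt N' n 0)
    (hA0 : 0 < A 0) (hB0 : 0 < B 0) (hN0 : 0 < N 0)
    (hmax : IsLocalMax (fun t => Real.log (A t) - Real.log (B t) + ε * (N t)⁻¹) 0) :
    (a * A 0 - A' 0 ^ 2) / A 0 ^ 2 - (b * B 0 - B' 0 ^ 2) / B 0 ^ 2
      + ε * (2 * N' 0 ^ 2 / N 0 ^ 3 - n / N 0 ^ 2) ≤ 0 := by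
  have hev : ∀ {F F' : ℝ → ℝ}, (∀ t, HasDerivAt F (F' t) t) → 0 < F 0 →
      ∀ᶠ t in 𝓝 (0 : ℝ), 0 < F t := fun hF h0 =>
    (hF 0).continuousAt.eventually (lt_mem_nhds h0)
  refine nonpos_of_isLocalMax_of_hasDerivAt
    (G' := fun t => A' t / A t - B' t / B t + ε * (-N' t / N t ^ 2)) ?_ ?_ hmax
  · filter_upwards [hev hA hA0, hev hB hB0, hev hN hN0] with t h1 h2 h3
    exact (((hA t).log h1.ne').sub ((hB t).log h2.ne')).add
      (((hN t).inv h3.ne').const_mul ε)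
  · have h := (((hA'.div (hA 0) hA0.ne')).sub (hB'.div (hB 0) hB0.ne')).add
      ((hN'.neg.div ((hN 0).pow 2) (pow_ne_zero 2 hN0.ne')).const_mul ε)
    refine h.congr_deriv ?_
    simp only [Pi.neg_apply, Pi.pow_apply]
    field_simp
    ring

/-- The function `z ↦ Im (p(z) * conj q(z))`. -/
noncomputable def imForm (p q : ℝ[X]) (z : ℂ) : ℝ := (aeval z p * conj (aeval z q)).im

lemma hasDerivAt_aeval_line (p : ℝ[X]) (z e : ℂ) (t : ℝ) :
    HasDerivAt (fun t : ℝ => aeval (z + t * e) p) (e * aeval (z + t * e) (derivative p)) t := by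
  have h1 : HasDerivAt (fun w : ℂ => aeval w p) (aeval (z + t * e) (derivative p)) (z + t * e) :=
    p.hasDerivAt_aeval _
  have h2 : HasDerivAt (fun t : ℝ => z + t * e) e t := by
    simpa using (((hasDerivAt_id t).ofReal_comp).mul_const e).const_add z
  exact (h1.comp t h2).congr_deriv (mul_comm _ _)

/-- The derivative of `imForm p q` at `z` in the direction `e`. -/
noncomputable def imForm' (p q : ℝ[X]) (e z : ℂ) : ℝ :=
  (e * aeval z (derivative p) * conj (aeval z q)
    + aeval z p * conj (e * aeval z (derivative q))).im

lemma hasDerivAt_im {f : ℝ → ℂ} {f' : ℂ} {t : ℝ} (h : HasDerivAt f f' t) :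
    HasDerivAt (fun t => (f t).im) f'.im t :=
  Complex.imCLM.hasFDerivAt.comp_hasDerivAt t h

lemma hasDerivAt_conj {f : ℝ → ℂ} {f' : ℂ} {t : ℝ} (h : HasDerivAt f f' t) :
    HasDerivAt (fun t => conj (f t)) (conj f') t :=
  Complex.conjCLE.toContinuousLinearMap.hasFDerivAt.comp_hasDerivAt t h

lemma hasDerivAt_imForm (p q : ℝ[X]) (z e : ℂ) (t : ℝ) :
    HasDerivAt (fun t : ℝ => imForm p q (z + t * e)) (imForm' p q e (z + t * e)) t := by
  exact hasDerivAt_im ((hasDerivAt_aeval_line p z e t).mul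
    (hasDerivAt_conj (hasDerivAt_aeval_line q z e t)))

lemma hasDerivAt_imForm' (p q : ℝ[X]) (z e : ℂ) (t : ℝ) :
    HasDerivAt (fun t : ℝ => imForm' p q e (z + t * e))
      (e * (e * aeval (z + t * e) (derivative (derivative p))) * conj (aeval (z + t * e) q)
        + e * aeval (z + t * e) (derivative p) * conj (e * aeval (z + t * e) (derivative q))
        + (e * aeval (z + t * e) (derivative p) * conj (e * aeval (z + t * e) (derivative q))
        + aeval (z + t * e) p *
            conj (e * (e * aeval (z + t * e) (derivative (derivative q)))))).im t := by
  exact hasDerivAt_im ((((hasDerivAt_aeval_line (derivative p) z e t).const_mul e).mul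
    (hasDerivAt_conj (hasDerivAt_aeval_line q z e t))).add
    ((hasDerivAt_aeval_line p z e t).mul
      (hasDerivAt_conj ((hasDerivAt_aeval_line (derivative q) z e t).const_mul e))))

/-- For `D = imForm p q` this reads `D ΔD - |∇D|² = -|p'q - q'p|²`: the letters stand for the values
of `p`, `q` and of their first and second derivatives at one point, and the two summands on the left
come from the directions `1` and `i`. -/
lemma imForm_identity (P Q P1 Q1 P2 Q2 : ℂ) :
    ((1 * (1 * P2) * conj Q + 1 * P1 * conj (1 * Q1)
        + (1 * P1 * conj (1 * Q1) + P * conj (1 * (1 * Q2)))).im * (P * conj Q).im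
      - (1 * P1 * conj Q + P * conj (1 * Q1)).im ^ 2)
    + ((Complex.I * (Complex.I * P2) * conj Q + Complex.I * P1 * conj (Complex.I * Q1)
        + (Complex.I * P1 * conj (Complex.I * Q1)
          + P * conj (Complex.I * (Complex.I * Q2)))).im * (P * conj Q).im
      - (Complex.I * P1 * conj Q + P * conj (Complex.I * Q1)).im ^ 2)
    = - Complex.normSq (P1 * Q - Q1 * P) := by
  simp [Complex.normSq_apply]
  ring

/-- Where `D₁ > D₂ > 0`, the equation `Δ log D = -|W|² / D²` with a common Wronskian `W` gives
`Δ log (D₁ / D₂) ≥ 0`, and `Δ |w + i|⁻² = 4 |w + i|⁻⁴ > 0`; hence there is no local maximum. The second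
term makes the inequality strict even at zeros of `W`. -/
lemma no_interior_max {p q P Q : ℝ[X]} {z : ℂ} {ε : ℝ} (hε : 0 < ε) (hz : 0 < z.im)
    (hw : derivative p * q - derivative q * p = derivative P * Q - derivative Q * P)
    (h2 : 0 < imForm P Q z) (h12 : imForm P Q z < imForm p q z)
    (hmax : IsLocalMax (fun w => Real.log (imForm p q w) - Real.log (imForm P Q w)
      + ε * (Complex.normSq (w + Complex.I))⁻¹) z) : False := by
  have h1 : 0 < imForm p q z := h2.trans h12
  set n : ℝ := Complex.normSq (z + Complex.I) with hn
  have hn0 : 0 < n := by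
    rw [hn, Complex.normSq_pos]
    intro h
    have := congrArg Complex.im h
    simp at this
    linarith
  have key : ∀ e : ℂ, Complex.normSq e = 1 → _ := fun e he => by
    have hmax' : IsLocalMax (fun t : ℝ => Real.log (imForm p q (z + t * e))
        - Real.log (imForm P Q (z + t * e))
        + ε * (Complex.normSq (z + t * e + Complex.I))⁻¹) 0 := by
      have hc : ContinuousAt (fun t : ℝ => z + t * e) 0 := by fun_prop
      have hmax0 : IsLocalMax (fun w => Real.log (imForm p q w) - Real.log (imForm P Q w)
        + ε * (Complex.normSq (w + Complex.I))⁻¹) ((fun t : ℝ => z + t * e) 0) := by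
        simpa using hmax
      exact hc.eventually hmax0
    exact second_deriv_log_ratio_nonpos
      (N' := fun t => 2 * ((z + t * e + Complex.I).re * e.re + (z + t * e + Complex.I).im * e.im))
      (n := 2)
      (hasDerivAt_imForm p q z e) (hasDerivAt_imForm' p q z e 0)
      (hasDerivAt_imForm P Q z e) (hasDerivAt_imForm' P Q z e 0)
      (fun t => by
        have : (fun t : ℝ => Complex.normSq (z + t * e + Complex.I))
            = fun t : ℝ => (z.re + t * e.re) ^ 2 + (z.im + t * e.im + 1) ^ 2 := by
          funext t; simp [Complex.normSq_apply]; ring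
        rw [this]
        have h1 := (((hasDerivAt_id t).mul_const e.re).const_add z.re).pow 2
        have h2 := ((((hasDerivAt_id t).mul_const e.im).const_add z.im).add_const 1).pow 2
        refine (h1.add h2).congr_deriv ?_
        simp; ring)
      (by
        have : (fun t : ℝ => 2 * ((z + t * e + Complex.I).re * e.re
              + (z + t * e + Complex.I).im * e.im))
            = fun t : ℝ => 2 * t * Complex.normSq e
              + 2 * (z.re * e.re + (z.im + 1) * e.im) := by
          funext t; simp [Complex.normSq_apply]; ring
        rw [this, he]
        exact ((((hasDerivAt_id (0:ℝ)).const_mul 2).mul_const 1).add_const _).congr_deriv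
          (by norm_num))
      (by simpa using h1) (by simpa using h2) (by simpa [hn] using hn0) hmax'
  have k1 := key 1 (by simp)
  have k2 := key Complex.I (by simp)
  simp only [Complex.ofReal_zero, zero_mul, add_zero, ← hn] at k1 k2
  have i1 := imForm_identity (aeval z p) (aeval z q) (aeval z (derivative p))
    (aeval z (derivative q)) (aeval z (derivative (derivative p)))
    (aeval z (derivative (derivative q)))
  have i2 := imForm_identity (aeval z P) (aeval z Q) (aeval z (derivative P))
    (aeval z (derivative Q)) (aeval z (derivative (derivative P)))
    (aeval z (derivative (derivative Q)))
  have hw' := congrArg (aeval z) hw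
  simp only [map_sub, map_mul] at hw'
  rw [hw'] at i1
  set w := Complex.normSq (aeval z (derivative P) * aeval z Q
    - aeval z (derivative Q) * aeval z P) with hwdef
  have hw0 : 0 ≤ w := Complex.normSq_nonneg _
  have hsum := add_nonpos k1 k2
  have hcomb : -w / imForm p q z ^ 2 + w / imForm P Q z ^ 2 + ε * (4 / n ^ 2) ≤ 0 := by
    refine le_of_eq_of_le ?_ hsum
    have hn2 : (z + Complex.I).re ^ 2 + (z + Complex.I).im ^ 2 = n := by
      rw [hn, Complex.normSq_apply]; ring
    have e1 : -w / imForm p q z ^ 2 = _ := congrArg (· / imForm p q z ^ 2) i1.symm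
    have e2 : w / imForm P Q z ^ 2 = -(-w / imForm P Q z ^ 2) := by ring
    have e3 : -w / imForm P Q z ^ 2 = _ := congrArg (· / imForm P Q z ^ 2) i2.symm
    have e4 : 4 / n ^ 2 = (2 * (2 * (z + Complex.I).re) ^ 2 / n ^ 3 - 2 / n ^ 2)
        + (2 * (2 * (z + Complex.I).im) ^ 2 / n ^ 3 - 2 / n ^ 2) := by
      have : (z + Complex.I).re ^ 2 = n - (z + Complex.I).im ^ 2 := by linarith
      rw [mul_pow, this]
      field_simp
      ring
    rw [e1, e2, e3, e4]
    simp only [imForm, imForm', Complex.one_re, Complex.one_im, Complex.I_re, Complex.I_im]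
    ring
  have h3 : w / imForm p q z ^ 2 ≤ w / imForm P Q z ^ 2 := by gcongr
  have h4 : 0 < ε * (4 / n ^ 2) := by positivity
  rw [neg_div] at hcomb
  linarith

/-! ### Pairs in partial fraction form -/

/-- The cofactor `qᵢ = ∏_{j ≠ i} (X - rⱼ)` of `X - rᵢ` in `rootPoly r`. -/
noncomputable def cof {n : ℕ} (r : Fin n → ℝ) (i : Fin n) : ℝ[X] :=
  ∏ j ∈ Finset.univ.erase i, (X - C (r j))

/-- The polynomial `p` with `p / q = X + a - ∑ cᵢ / (X - rᵢ)`, where `q = rootPoly r`. For `c > 0`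
the quotient `p / q` maps the upper half-plane to itself. -/
noncomputable def pickPoly {n : ℕ} (a : ℝ) (r c : Fin n → ℝ) : ℝ[X] :=
  (X + C a) * rootPoly r - ∑ i, C (c i) * cof r i

/-- The form `|q(z)|² + ∑ cᵢ |qᵢ(z)|²`, equal to `Im (p(z) * conj q(z)) / Im z` off the real axis
(`imForm_pickPoly`) and to the Wronskian of `p` and `q` on it (`bez_ofReal`), for
`p = pickPoly a r c` and `q = rootPoly r`. -/
noncomputable def bez {n : ℕ} (r c : Fin n → ℝ) (z : ℂ) : ℝ :=
  Complex.normSq (aeval z (rootPoly r)) + ∑ i, c i * Complex.normSq (aeval z (cof r i))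

section basic
variable {n : ℕ} (r c : Fin n → ℝ) (a : ℝ)

lemma sub_mul_cof (i : Fin n) : (X - C (r i)) * cof r i = rootPoly r :=
  Finset.mul_prod_erase Finset.univ (fun j => X - C (r j)) (Finset.mem_univ i)

lemma rootPoly_monic : (rootPoly r).Monic := monic_prod_X_sub_C r Finset.univ

lemma rootPoly_natDegree : (rootPoly r).natDegree = n := by
  simp [rootPoly]

lemma rootPoly_coeff : (rootPoly r).coeff n = 1 := by
  have := rootPoly_monic r
  rwa [Monic, leadingCoeff, rootPoly_natDegree] at this

lemma cof_monic (i : Fin n) : (cof r i).Monic := monic_prod_X_sub_C r _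

lemma cof_natDegree (i : Fin n) : (cof r i).natDegree = n - 1 := by
  simp [cof]

lemma cof_degree_lt (i : Fin n) : (cof r i).degree < n := by
  rw [degree_eq_natDegree (cof_monic r i).ne_zero, cof_natDegree]
  have := i.2
  exact_mod_cast (by omega : n - 1 < n)

lemma rootPoly_eval (x : ℝ) : (rootPoly r).eval x = ∏ j, (x - r j) := by
  simp [rootPoly, eval_prod]

lemma cof_eval (i : Fin n) (x : ℝ) :
    (cof r i).eval x = ∏ j ∈ Finset.univ.erase i, (x - r j) := by
  simp [cof, eval_prod]

lemma rootPoly_eval_self (i : Fin n) : (rootPoly r).eval (r i) = 0 := by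
  rw [← sub_mul_cof r i]; simp

lemma cof_eval_ne {i j : Fin n} (h : j ≠ i) : (cof r j).eval (r i) = 0 := by
  rw [cof_eval]
  exact Finset.prod_eq_zero (Finset.mem_erase.2 ⟨h.symm, Finset.mem_univ _⟩) (sub_self _)

variable {r} in
lemma cof_eval_self_ne_zero (hr : Function.Injective r) (i : Fin n) :
    (cof r i).eval (r i) ≠ 0 := by
  rw [cof_eval, Finset.prod_ne_zero_iff]
  intro j hj
  exact sub_ne_zero.2 fun h => (Finset.mem_erase.1 hj).1 (hr h.symm)

lemma pickPoly_eval_node (i : Fin n) :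
    (pickPoly a r c).eval (r i) = -(c i * (cof r i).eval (r i)) := by
  simp only [pickPoly, eval_sub, eval_mul, rootPoly_eval_self, mul_zero, zero_sub,
    eval_finsetSum, eval_C]
  rw [Finset.sum_eq_single i (fun j _ h => by rw [cof_eval_ne r h, mul_zero]) (by simp)]

/-- The Wronskian of a pair in partial fraction form is the sum of squares `q² + ∑ cᵢ qᵢ²`. -/
lemma pickPoly_wronskian :
    derivative (pickPoly a r c) * rootPoly r - derivative (rootPoly r) * pickPoly a r c
      = rootPoly r ^ 2 + ∑ i, C (c i) * cof r i ^ 2 := by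
  have h : ∀ i, cof r i ^ 2
      = derivative (rootPoly r) * cof r i - derivative (cof r i) * rootPoly r := fun i => by
    rw [← sub_mul_cof r i]
    simp only [derivative_mul, derivative_sub, derivative_X, derivative_C]
    ring
  simp only [h, pickPoly, derivative_sub, derivative_mul, derivative_sum, derivative_add,
    derivative_X, derivative_C, mul_sub, sub_mul, Finset.mul_sum, Finset.sum_mul,
    Finset.sum_sub_distrib]
  have e1 : ∀ i, derivative (rootPoly r) * (C (c i) * cof r i)
      = C (c i) * (derivative (rootPoly r) * cof r i) := fun i => by ring
  simp only [e1, zero_mul, zero_add, mul_assoc]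
  ring

lemma sum_cof_sq_degree_lt :
    (∑ i, C (c i) * cof r i ^ 2).degree < (rootPoly r ^ 2).degree := by
  have hq : (rootPoly r ^ 2).degree = (2 * n : ℕ) := by
    rw [degree_eq_natDegree ((rootPoly_monic r).pow 2).ne_zero, (rootPoly_monic r).natDegree_pow,
      rootPoly_natDegree]
  rw [hq]
  refine lt_of_le_of_lt (degree_sum_le _ _) ((Finset.sup_lt_iff (WithBot.bot_lt_coe _)).2
    fun i _ => ?_)
  refine lt_of_le_of_lt (degree_mul_le _ _)
    (lt_of_le_of_lt (add_le_add_left degree_C_le _) ?_)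
  rw [zero_add, degree_eq_natDegree ((cof_monic r i).pow 2).ne_zero, (cof_monic r i).natDegree_pow,
    cof_natDegree]
  have := i.2
  exact_mod_cast (by omega : 2 * (n - 1) < 2 * n)

lemma wronskian_form_monic : (rootPoly r ^ 2 + ∑ i, C (c i) * cof r i ^ 2).Monic :=
  ((rootPoly_monic r).pow 2).add_of_left (sum_cof_sq_degree_lt r c)

lemma wronskian_form_natDegree :
    (rootPoly r ^ 2 + ∑ i, C (c i) * cof r i ^ 2).natDegree = 2 * n := by
  rw [natDegree_add_eq_left_of_degree_lt (sum_cof_sq_degree_lt r c),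
    (rootPoly_monic r).natDegree_pow, rootPoly_natDegree]

lemma imForm_pickPoly (z : ℂ) :
    imForm (pickPoly a r c) (rootPoly r) z = z.im * bez r c z := by
  have h : ∀ i, (aeval z (cof r i) * conj (aeval z (rootPoly r))).im
      = -(z.im * Complex.normSq (aeval z (cof r i))) := fun i => by
    rw [← sub_mul_cof r i]
    simp [Complex.normSq_apply]
    ring
  have h2 : aeval z (pickPoly a r c) = (z + a) * aeval z (rootPoly r)
      - ∑ i, (c i : ℂ) * aeval z (cof r i) := by
    simp [pickPoly]
  rw [imForm, bez, h2, sub_mul, Finset.sum_mul, Complex.sub_im, Complex.im_sum, mul_add,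
    Finset.mul_sum, mul_assoc, Complex.mul_conj, sub_eq_add_neg, ← Finset.sum_neg_distrib]
  congr 1
  · simp
  · refine Finset.sum_congr rfl fun i _ => ?_
    rw [mul_assoc, Complex.im_ofReal_mul, h]
    ring

lemma bez_ofReal (x : ℝ) :
    bez r c x = (rootPoly r ^ 2 + ∑ i, C (c i) * cof r i ^ 2).eval x := by
  have h : ∀ f : ℝ[X], aeval (x : ℂ) f = ((f.eval x : ℝ) : ℂ) := fun f =>
    aeval_algebraMap_apply_eq_algebraMap_eval x f
  simp [bez, h, Complex.normSq_ofReal, eval_finsetSum, sq]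

variable {r c} in
lemma bez_pos (hr : Function.Injective r) (hc : ∀ i, 0 < c i) (z : ℂ) : 0 < bez r c z := by
  have hs : ∀ i, 0 ≤ c i * Complex.normSq (aeval z (cof r i)) := fun i =>
    mul_nonneg (hc i).le (Complex.normSq_nonneg _)
  by_cases h : aeval z (rootPoly r) = 0
  · obtain ⟨i, hi⟩ : ∃ i, z = r i := by
      simp only [rootPoly, map_prod, Finset.prod_eq_zero_iff, Finset.mem_univ, true_and] at h
      obtain ⟨i, hi⟩ := h
      exact ⟨i, by simpa [sub_eq_zero] using hi⟩
    refine add_pos_of_nonneg_of_pos (Complex.normSq_nonneg _)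
      (Finset.sum_pos' (fun i _ => hs i) ⟨i, Finset.mem_univ _, ?_⟩)
    refine mul_pos (hc i) (Complex.normSq_pos.2 ?_)
    have : aeval (r i : ℂ) (cof r i) = (((cof r i).eval (r i) : ℝ) : ℂ) :=
      aeval_algebraMap_apply_eq_algebraMap_eval _ _
    rw [hi, this]
    exact_mod_cast cof_eval_self_ne_zero hr i
  · exact add_pos_of_pos_of_nonneg (Complex.normSq_pos.2 h) (Finset.sum_nonneg fun i _ => hs i)

lemma continuous_aeval' (p : ℝ[X]) : Continuous fun z : ℂ => aeval z p := p.continuous_aeval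

lemma continuous_bez : Continuous (bez r c) := by
  unfold bez
  refine (Complex.continuous_normSq.comp (continuous_aeval' _)).add
    (continuous_finsetSum _ fun i _ => continuous_const.mul
      (Complex.continuous_normSq.comp (continuous_aeval' _)))

lemma tendsto_aeval_div_pow {p : ℝ[X]} {m : ℕ} (hp : p.natDegree ≤ m) :
    Tendsto (fun z : ℂ => aeval z p / z ^ m) (Bornology.cobounded ℂ)
      (𝓝 (p.coeff m : ℂ)) := by
  have hE : ∀ᶠ z : ℂ in Bornology.cobounded ℂ, z ≠ 0 :=
    Bornology.eventually_ne_cobounded 0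
  have h1 : Tendsto (fun z : ℂ => aeval z⁻¹ (reflect m p)) (Bornology.cobounded ℂ)
      (𝓝 (aeval (0 : ℂ) (reflect m p))) :=
    ((continuous_aeval' _).tendsto 0).comp tendsto_inv₀_cobounded
  have h0 : aeval (0 : ℂ) (reflect m p) = (p.coeff m : ℂ) := by
    rw [← coeff_zero_eq_aeval_zero' ]
    simp
  rw [h0] at h1
  refine h1.congr' ?_
  filter_upwards [hE] with z hz
  rw [eq_div_iff (pow_ne_zero _ hz)]
  let : Invertible z := invertibleOfNonzero hz
  have := eval₂_reflect_mul_pow (algebraMap ℝ ℂ) z m p hp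
  simpa [aeval_def] using this

lemma tendsto_bez : Tendsto (fun z : ℂ => bez r c z / Complex.normSq (z ^ n))
    (Bornology.cobounded ℂ) (𝓝 1) := by
  have h1 := tendsto_aeval_div_pow (rootPoly_natDegree r).le
  rw [rootPoly_coeff] at h1
  have h2 : ∀ i, Tendsto (fun z : ℂ => aeval z (cof r i) / z ^ n) (Bornology.cobounded ℂ)
      (𝓝 0) := fun i => by
    have := tendsto_aeval_div_pow (p := cof r i) (m := n) (by rw [cof_natDegree]; omega)
    rwa [coeff_eq_zero_of_degree_lt (cof_degree_lt r i), Complex.ofReal_zero] at this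
  have h3 := ((Complex.continuous_normSq.tendsto _).comp h1).add
    (tendsto_finsetSum Finset.univ fun i _ =>
      (((Complex.continuous_normSq.tendsto _).comp (h2 i)).const_mul (c i)))
  simp only [Complex.ofReal_one, map_one, map_zero, mul_zero, Finset.sum_const_zero,
    add_zero] at h3
  refine h3.congr fun z => ?_
  simp only [Function.comp, bez, add_div, Finset.sum_div, map_div₀, mul_div_assoc]

end basic

/-! ### Uniqueness -/

/-- Comparison principle. The logarithm `v` of the ratio of the two forms tends to `0` at infinity
and vanishes on the real axis, so a positive value of `v` would force the perturbed function
`v + ε / |w + i|²` to have a maximum inside the upper half-plane, which `no_interior_max`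
forbids. -/
lemma bez_le_of_wronskian_eq {n : ℕ} {a b : ℝ} {r c s d : Fin n → ℝ}
    (hr : Function.Injective r) (hc : ∀ i, 0 < c i)
    (hs : Function.Injective s) (hd : ∀ i, 0 < d i)
    (hw : derivative (pickPoly a r c) * rootPoly r - derivative (rootPoly r) * pickPoly a r c
      = derivative (pickPoly b s d) * rootPoly s - derivative (rootPoly s) * pickPoly b s d)
    {z : ℂ} (hz : 0 < z.im) : bez r c z ≤ bez s d z := by
  by_contra hlt
  push Not at hlt
  have p1 := bez_pos hr hc
  have p2 := bez_pos hs hd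
  set v : ℂ → ℝ := fun w => Real.log (bez r c w) - Real.log (bez s d w) with hv
  set m : ℝ := v z with hm
  have hm0 : 0 < m := sub_pos.2 (Real.log_lt_log (p2 z) hlt)
  -- `|w + i| ≥ 1` on the closed half-plane, so the perturbation stays below `m / 2` there.
  set g : ℂ → ℝ := fun w => v w + m / 2 * (Complex.normSq (w + Complex.I))⁻¹ with hg
  have hφ : ∀ w : ℂ, 0 ≤ w.im → 1 ≤ Complex.normSq (w + Complex.I) := fun w hw0 => by
    simp only [Complex.normSq_apply, Complex.add_re, Complex.add_im, Complex.I_re, Complex.I_im]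
    nlinarith [mul_self_nonneg (w.re + 0)]
  have hvc : Continuous v :=
    ((continuous_bez r c).log fun w => (p1 w).ne').sub
      ((continuous_bez s d).log fun w => (p2 w).ne')
  have hvinf : Tendsto v (Bornology.cobounded ℂ) (𝓝 0) := by
    have h := ((tendsto_bez r c).div (tendsto_bez s d) one_ne_zero)
    rw [div_one] at h
    have h' := h.log one_ne_zero
    rw [Real.log_one] at h'
    refine h'.congr' ?_
    filter_upwards [Bornology.eventually_ne_cobounded (0 : ℂ)] with w hw0
    have hn : Complex.normSq (w ^ n) ≠ 0 := by
      rw [Ne, Complex.normSq_eq_zero]; exact pow_ne_zero _ hw0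
    simp only [Pi.div_apply, hv]
    rw [div_div_div_cancel_right₀ hn, Real.log_div (ne_of_gt (p1 w)) (ne_of_gt (p2 w))]
  -- Outside `K` the perturbed function is at most `m ≤ g z`, so its maximum over `K` is global.
  set K : Set ℂ := {w | 0 ≤ w.im ∧ m / 2 ≤ v w} with hK
  have hKc : IsCompact K := by
    refine Metric.isCompact_of_isClosed_isBounded ?_ ?_
    · exact (isClosed_le continuous_const Complex.continuous_im).inter
        (isClosed_le continuous_const hvc)
    · have : ∀ᶠ w in Bornology.cobounded ℂ, v w < m / 2 :=
        hvinf.eventually (gt_mem_nhds (half_pos hm0))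
      refine Bornology.isBounded_def.2 ?_
      filter_upwards [this] with w h1 h2
      exact not_lt.2 h2.2 h1
  have hzK : z ∈ K := ⟨hz.le, by rw [← hm]; linarith⟩
  have hgc : ContinuousOn g K := by
    refine hvc.continuousOn.add (continuousOn_const.mul (ContinuousOn.inv₀ ?_ ?_))
    · exact (Complex.continuous_normSq.comp (continuous_id.add continuous_const)).continuousOn
    · intro w hwK
      have := hφ w hwK.1
      positivity
  obtain ⟨y, hyK, hy⟩ := hKc.exists_isMaxOn ⟨z, hzK⟩ hgc
  have hvreal : ∀ x : ℝ, v x = 0 := fun x => by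
    have : bez r c x = bez s d x := by
      rw [bez_ofReal, bez_ofReal, ← pickPoly_wronskian r c a, hw, pickPoly_wronskian]
    simp [hv, this]
  have hyim : 0 < y.im := by
    refine lt_of_le_of_ne hyK.1 fun h => ?_
    have hyx : y = (y.re : ℂ) := Complex.ext (by simp) (by simp [← h])
    have h2 := hyK.2
    rw [hyx, hvreal] at h2
    linarith
  have hglobal : ∀ w : ℂ, 0 ≤ w.im → g w ≤ g y := fun w hw0 => by
    by_cases hwK : w ∈ K
    · exact hy hwK
    · have h1 : v w < m / 2 := by
        by_contra h
        exact hwK ⟨hw0, not_lt.1 h⟩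
      have h2 : (Complex.normSq (w + Complex.I))⁻¹ ≤ 1 := inv_le_one_of_one_le₀ (hφ w hw0)
      have h3 : g w ≤ m := by simp only [hg]; nlinarith
      have h4 : m ≤ g z := by
        have : 0 ≤ m / 2 * (Complex.normSq (z + Complex.I))⁻¹ :=
          mul_nonneg (by linarith) (inv_nonneg.2 (Complex.normSq_nonneg _))
        simp only [hg]; linarith
      exact h3.trans (h4.trans (hy hzK))
  refine no_interior_max (half_pos hm0) hyim hw ?_ ?_ ?_
  · rw [imForm_pickPoly]; exact mul_pos hyim (p2 y)
  · rw [imForm_pickPoly, imForm_pickPoly]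
    refine mul_lt_mul_of_pos_left ?_ hyim
    have : 0 < v y := lt_of_lt_of_le (half_pos hm0) hyK.2
    exact (Real.log_lt_log_iff (p2 y) (p1 y)).1 (sub_pos.1 this)
  · have hev : ∀ᶠ w : ℂ in 𝓝 y, 0 < w.im :=
      Complex.continuous_im.continuousAt.eventually (lt_mem_nhds hyim)
    have heq : ∀ w : ℂ, 0 < w.im → Real.log (imForm (pickPoly a r c) (rootPoly r) w)
        - Real.log (imForm (pickPoly b s d) (rootPoly s) w) = v w := fun w hw0 => by
      rw [imForm_pickPoly, imForm_pickPoly, Real.log_mul hw0.ne' (p1 w).ne',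
        Real.log_mul hw0.ne' (p2 w).ne']
      simp only [hv]; ring
    filter_upwards [hev] with w hw0
    rw [heq w hw0, heq y hyim]
    exact hglobal w hw0.le

/-- Polarization: the values of `bez r c` at `x ± i y` determine the symmetric bilinear kernel
`q(α) q(β) + ∑ cᵢ qᵢ(α) qᵢ(β)` at all real `α, β`. For fixed `x`, both are values of one polynomial
in `S`, at `S = y²` and at `S = -t²` with `α, β = x ± t`. -/
lemma bez_polar {n : ℕ} {r c s d : Fin n → ℝ}
    (h : ∀ z : ℂ, 0 < z.im → bez r c z = bez s d z) (α β : ℝ) :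
    (rootPoly r).eval α * (rootPoly r).eval β
        + ∑ i, c i * ((cof r i).eval α * (cof r i).eval β)
      = (rootPoly s).eval α * (rootPoly s).eval β
        + ∑ i, d i * ((cof s i).eval α * (cof s i).eval β) := by
  obtain ⟨x, t, rfl, rfl⟩ : ∃ x t : ℝ, α = x + t ∧ β = x - t :=
    ⟨(α + β) / 2, (α - β) / 2, by ring, by ring⟩
  let F : (Fin n → ℝ) → (Fin n → ℝ) → ℝ[X] := fun r c =>
    ∏ j, (C ((x - r j) ^ 2) + X)
      + ∑ i, C (c i) * ∏ j ∈ Finset.univ.erase i, (C ((x - r j) ^ 2) + X)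
  have hF1 : ∀ (r c : Fin n → ℝ) (y : ℝ), (F r c).eval (y ^ 2) = bez r c (x + y * Complex.I) :=
    fun r c y => by
      have : ∀ ρ : ℝ, Complex.normSq (x + y * Complex.I - ρ) = (x - ρ) ^ 2 + y ^ 2 := fun ρ => by
        simp [Complex.normSq_apply]; ring
      simp [F, bez, rootPoly, cof, eval_prod, eval_finsetSum, this]
  have hF2 : ∀ r c : Fin n → ℝ, (F r c).eval (-t ^ 2)
      = (rootPoly r).eval (x + t) * (rootPoly r).eval (x - t)
        + ∑ i, c i * ((cof r i).eval (x + t) * (cof r i).eval (x - t)) := fun r c => by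
    have : ∀ ρ : ℝ, (x - ρ) ^ 2 + -t ^ 2 = (x + t - ρ) * (x - t - ρ) := fun ρ => by ring
    simp [F, rootPoly_eval, cof_eval, eval_prod, eval_finsetSum, this, Finset.prod_mul_distrib]
  have hFeq : F r c = F s d := by
    refine eq_of_infinite_eval_eq _ _ ((Set.Ioi_infinite (0 : ℝ)).mono fun S hS => ?_)
    have hS' : (0 : ℝ) < S := hS
    show (F r c).eval S = (F s d).eval S
    rw [← Real.sq_sqrt hS'.le, hF1, hF1]
    exact h _ (by simpa using hS')
  rw [← hF2, ← hF2, hFeq]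

/-- `q(β)` is the coefficient of `αⁿ` in the polarized kernel. -/
lemma rootPoly_eq_of_bez_eq {n : ℕ} {r c s d : Fin n → ℝ}
    (h : ∀ z : ℂ, 0 < z.im → bez r c z = bez s d z) : rootPoly r = rootPoly s := by
  refine Polynomial.funext fun β => ?_
  have key : C ((rootPoly r).eval β) * rootPoly r
        + ∑ i, C (c i * (cof r i).eval β) * cof r i
      = C ((rootPoly s).eval β) * rootPoly s
        + ∑ i, C (d i * (cof s i).eval β) * cof s i := by
    refine Polynomial.funext fun α => ?_
    have := bez_polar h α β
    simp only [eval_add, eval_mul, eval_C, eval_finsetSum]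
    convert this using 2
    · ring
    · exact Finset.sum_congr rfl fun i _ => by ring
    · ring
    · exact Finset.sum_congr rfl fun i _ => by ring
  have lead : ∀ (r c : Fin n → ℝ), (C ((rootPoly r).eval β) * rootPoly r
        + ∑ i, C (c i * (cof r i).eval β) * cof r i).coeff n = (rootPoly r).eval β := fun r c => by
    have h1 := rootPoly_coeff r
    have h2 : ∀ i, (cof r i).coeff n = 0 := fun i =>
      coeff_eq_zero_of_degree_lt (cof_degree_lt r i)
    simp only [coeff_add, coeff_C_mul, finsetSum_coeff, h1, h2]
    simp
  rw [← lead r c, key, lead]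

lemma strictMono_eq_of_rootPoly_eq {n : ℕ} {r s : Fin n → ℝ} (hr : StrictMono r)
    (hs : StrictMono s) (h : rootPoly r = rootPoly s) : r = s := by
  have hrange : ∀ r : Fin n → ℝ, Set.range r = {x | (rootPoly r).eval x = 0} := fun r => by
    ext x
    simp [rootPoly_eval, Finset.prod_eq_zero_iff, sub_eq_zero, eq_comm (a := x)]
  exact (hr.range_inj hs).1 (by rw [hrange, hrange, h])

/-- The Wronskian determines the nodes `r` and the weights `c`; the constant `a` is free, since
adding a multiple of `q` to `p` does not change the Wronskian. -/
lemma pickPoly_unique {n : ℕ} {a b : ℝ} {r c s d : Fin n → ℝ}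
    (hr : StrictMono r) (hc : ∀ i, 0 < c i) (hs : StrictMono s) (hd : ∀ i, 0 < d i)
    (hw : derivative (pickPoly a r c) * rootPoly r - derivative (rootPoly r) * pickPoly a r c
      = derivative (pickPoly b s d) * rootPoly s - derivative (rootPoly s) * pickPoly b s d) :
    r = s ∧ c = d := by
  have hbez : ∀ z : ℂ, 0 < z.im → bez r c z = bez s d z := fun z hz =>
    le_antisymm (bez_le_of_wronskian_eq hr.injective hc hs.injective hd hw hz)
      (bez_le_of_wronskian_eq hs.injective hd hr.injective hc hw.symm hz)
  obtain rfl := strictMono_eq_of_rootPoly_eq hr hs (rootPoly_eq_of_bez_eq hbez)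
  refine ⟨rfl, funext fun i => ?_⟩
  have h := bez_polar hbez (r i) (r i)
  have hne := cof_eval_self_ne_zero hr.injective i
  have hsum : ∀ c : Fin n → ℝ, ∑ j, c j * ((cof r j).eval (r i) * (cof r j).eval (r i))
      = c i * ((cof r i).eval (r i) * (cof r i).eval (r i)) := fun c =>
    Finset.sum_eq_single i (fun j _ hj => by rw [cof_eval_ne r hj]; ring) (by simp)
  rw [hsum, hsum] at h
  exact mul_right_cancel₀ (mul_ne_zero hne hne) (add_left_cancel h)

/-! ### Existence -/

/-- The quotient `v / u` has a finite limit at `±∞`, hence is bounded above. -/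
lemma exists_bound_of_pos {u v : ℝ[X]} {m : ℕ} (hu : u.Monic) (hum : u.natDegree = m)
    (hpos : ∀ x, 0 < u.eval x) (hv : v.natDegree ≤ m) :
    ∃ M : ℝ, 0 < M ∧ ∀ x, v.eval x ≤ M * u.eval x := by
  have hcont : Continuous fun x => v.eval x / u.eval x :=
    v.continuous.div u.continuous fun x => (hpos x).ne'
  have hlim : Tendsto (fun x => v.eval x / u.eval x) (cocompact ℝ) (𝓝 (v.coeff m)) := by
    have hcoe : Tendsto (fun x : ℝ => (x : ℂ)) (cocompact ℝ) (Bornology.cobounded ℂ) := by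
      rw [← tendsto_norm_atTop_iff_cobounded]
      refine (tendsto_norm_cocompact_atTop (E := ℝ)).congr fun x => (Complex.norm_real x).symm
    have h1 := (tendsto_aeval_div_pow hv).comp hcoe
    have h2 := (tendsto_aeval_div_pow hum.le).comp hcoe
    have hc : u.coeff m = 1 := by rw [← hum]; exact hu
    rw [hc] at h2
    have h3 := h1.div h2 (by simp)
    rw [Complex.ofReal_one, div_one] at h3
    have h4 := (Complex.continuous_re.tendsto _).comp h3
    rw [Complex.ofReal_re] at h4
    have hE : ∀ᶠ x : ℝ in cocompact ℝ, x ≠ 0 := by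
      have := (Set.finite_singleton (0 : ℝ)).isCompact.compl_mem_cocompact
      filter_upwards [this] with x hx using hx
    refine h4.congr' ?_
    filter_upwards [hE] with x hx
    have h : ∀ f : ℝ[X], aeval (x : ℂ) f = ((f.eval x : ℝ) : ℂ) := fun f =>
      aeval_algebraMap_apply_eq_algebraMap_eval x f
    simp only [Function.comp, Pi.div_apply, h]
    rw [div_div_div_cancel_right₀ (pow_ne_zero _ (by exact_mod_cast hx)),
      ← Complex.ofReal_div, Complex.ofReal_re]
  have hev : ∀ᶠ x in cocompact ℝ, v.eval x / u.eval x ≤ |v.coeff m| + 1 :=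
    (hlim.eventually (gt_mem_nhds (lt_of_le_of_lt (le_abs_self _) (lt_add_one _)))).mono
      fun x hx => hx.le
  by_cases hall : ∀ x, v.eval x / u.eval x ≤ |v.coeff m| + 1
  · exact ⟨|v.coeff m| + 1, by positivity, fun x => (div_le_iff₀ (hpos x)).1 (hall x)⟩
  · push Not at hall
    obtain ⟨x₀, hx₀⟩ := hall
    obtain ⟨y, hy⟩ := hcont.exists_forall_ge' x₀ (hev.mono fun x hx => hx.trans hx₀.le)
    refine ⟨v.eval y / u.eval y, ?_, fun x => (div_le_iff₀ (hpos x)).1 (hy x)⟩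
    have := hy x₀
    have : (0 : ℝ) ≤ |v.coeff m| := abs_nonneg _
    linarith

/-- The weighted Fekete functional `∏_{i ≠ j} (rᵢ - rⱼ)² / ∏ᵢ u(rᵢ)²`, the product running over
ordered pairs. It is the square of the exponential of minus the energy
`∑ᵢ log u(rᵢ) - ∑_{i ≠ j} log |rᵢ - rⱼ|` of `n` unit charges in the external field `log u`. -/
noncomputable def fekete {n : ℕ} (u : ℝ[X]) (r : Fin n → ℝ) : ℝ :=
  (∏ i, ∏ j ∈ Finset.univ.erase i, (r i - r j) ^ 2) / ∏ i, (u.eval (r i)) ^ 2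

lemma one_le_prod_real {ι : Type*} {s : Finset ι} {f : ι → ℝ} (h : ∀ i ∈ s, 1 ≤ f i) :
    1 ≤ ∏ i ∈ s, f i := by
  simpa using Finset.prod_le_prod (f := fun _ => (1 : ℝ)) (fun _ _ => zero_le_one) h

/-- Decay of the functional at infinity: `(rᵢ - rⱼ)² ≤ (1 + rᵢ²)(1 + rⱼ²)` bounds the numerator by
`T ^ (2n - 2)` with `T = ∏ (1 + rᵢ²)`, while the denominator is at least a multiple of `T ^ (2n)`. -/
lemma fekete_le {n : ℕ} {u : ℝ[X]} (hpos : ∀ x, 0 < u.eval x) {M : ℝ} (hM : 0 < M)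
    (hb : ∀ x, (1 + x ^ 2) ^ n ≤ M * u.eval x) (r : Fin n → ℝ) (i : Fin n) :
    fekete u r * |r i| ≤ (M ^ n) ^ 2 := by
  set T : ℝ := ∏ i, (1 + r i ^ 2) with hT
  have hw1 : ∀ i, 1 ≤ 1 + r i ^ 2 := fun i => by nlinarith [sq_nonneg (r i)]
  have hT1 : 1 ≤ T := one_le_prod_real fun i _ => hw1 i
  have hTi : |r i| ≤ T := by
    have h1 : 1 + r i ^ 2 ≤ T := by
      rw [hT, ← Finset.mul_prod_erase Finset.univ _ (Finset.mem_univ i)]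
      exact le_mul_of_one_le_right (by positivity)
        (one_le_prod_real fun j _ => hw1 j)
    have h2 : |r i| ≤ 1 + r i ^ 2 := by
      rw [← sq_abs]; nlinarith [sq_nonneg (|r i| - 1), abs_nonneg (r i)]
    exact h2.trans h1
  set U : ℝ := ∏ i, u.eval (r i) with hU
  have hU0 : 0 < U := Finset.prod_pos fun i _ => hpos _
  set N : ℝ := ∏ i, ∏ j ∈ Finset.univ.erase i, (r i - r j) ^ 2 with hN
  have hN0 : 0 ≤ N := Finset.prod_nonneg fun i _ => Finset.prod_nonneg fun j _ => sq_nonneg _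
  have h1 : N * T ^ 2 ≤ T ^ n * T ^ n := by
    have e1 : N * T ^ 2 = ∏ i, ((∏ j ∈ Finset.univ.erase i, (r i - r j) ^ 2)
        * (1 + r i ^ 2) ^ 2) := by
      rw [Finset.prod_mul_distrib, Finset.prod_pow]
    have e2 : T ^ n * T ^ n = ∏ i, ((1 + r i ^ 2) ^ n * T) := by
      rw [Finset.prod_mul_distrib, Finset.prod_pow]; simp [hT]
    rw [e1, e2]
    refine Finset.prod_le_prod (fun i _ => mul_nonneg
      (Finset.prod_nonneg fun j _ => sq_nonneg _) (sq_nonneg _)) fun i _ => ?_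
    have e3 : (1 + r i ^ 2) ^ n * T = (∏ j ∈ Finset.univ.erase i,
        ((1 + r i ^ 2) * (1 + r j ^ 2))) * (1 + r i ^ 2) ^ 2 := by
      have : (1 + r i ^ 2) ^ n * T = ∏ j, ((1 + r i ^ 2) * (1 + r j ^ 2)) := by
        rw [Finset.prod_mul_distrib]; simp [hT]
      rw [this, ← Finset.prod_erase_mul Finset.univ _ (Finset.mem_univ i),
        ← sq (1 + r i ^ 2)]
    rw [e3]
    refine mul_le_mul_of_nonneg_right ?_ (sq_nonneg _)
    refine Finset.prod_le_prod (fun j _ => sq_nonneg _) fun j _ => ?_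
    nlinarith [sq_nonneg (1 + r i * r j)]
  have h2 : T ^ n ≤ M ^ n * U := by
    have e1 : T ^ n = ∏ i, (1 + r i ^ 2) ^ n := (Finset.prod_pow _ _ _).symm
    have e2 : M ^ n * U = ∏ i, (M * u.eval (r i)) := by
      rw [Finset.prod_mul_distrib]; simp [hU]
    rw [e1, e2]
    exact Finset.prod_le_prod (fun i _ => by positivity) fun i _ => hb _
  have h3 : N * |r i| ≤ (M ^ n) ^ 2 * U ^ 2 := by
    calc N * |r i| ≤ N * T ^ 2 := by
          refine mul_le_mul_of_nonneg_left (hTi.trans ?_) hN0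
          nlinarith
      _ ≤ T ^ n * T ^ n := h1
      _ ≤ (M ^ n * U) * (M ^ n * U) := by gcongr
      _ = _ := by ring
  rw [fekete, Finset.prod_pow, div_mul_eq_mul_div, div_le_iff₀ (by positivity)]
  exact h3

lemma exists_fekete_max {n : ℕ} {u : ℝ[X]} (hu : u.Monic) (hdeg : u.natDegree = 2 * n)
    (hpos : ∀ x, 0 < u.eval x) :
    ∃ r : Fin n → ℝ, Function.Injective r ∧ ∀ s : Fin n → ℝ, fekete u s ≤ fekete u r := by
  obtain ⟨M, hM, hb⟩ := exists_bound_of_pos (v := (1 + X ^ 2) ^ n) hu hdeg hpos (by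
    refine natDegree_pow_le_of_le n (m := 2) ?_ |>.trans (by omega)
    compute_degree)
  simp only [eval_pow, eval_add, eval_one, eval_X] at hb
  have hUpos : ∀ r : Fin n → ℝ, 0 < ∏ i, (u.eval (r i)) ^ 2 := fun r =>
    Finset.prod_pos fun i _ => pow_pos (hpos _) 2
  have hcont : Continuous (fekete u : (Fin n → ℝ) → ℝ) := by
    refine Continuous.div (by fun_prop) ?_ fun r => (hUpos r).ne'
    exact continuous_finsetProd _ fun i _ => (u.continuous.comp (continuous_apply i)).pow 2
  set r₀ : Fin n → ℝ := fun i => (i : ℕ) with hr₀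
  have h0 : 0 < fekete u r₀ := by
    refine div_pos (Finset.prod_pos fun i _ => Finset.prod_pos fun j hj => ?_) (hUpos _)
    have hij : ((i : ℕ) : ℝ) ≠ (j : ℕ) := fun h =>
      Finset.ne_of_mem_erase hj (Fin.ext (Nat.cast_injective h).symm)
    have := sub_ne_zero.2 hij
    positivity
  have hev : ∀ᶠ r in cocompact (Fin n → ℝ), fekete u r ≤ fekete u r₀ := by
    set B := (M ^ n) ^ 2 / fekete u r₀ with hB
    filter_upwards [(tendsto_norm_cocompact_atTop (E := Fin n → ℝ)).eventually_gt_atTop B]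
      with r hr
    by_contra hlt
    push Not at hlt
    refine absurd hr (not_lt.2 ((pi_norm_le_iff_of_nonneg (by positivity)).2 fun i => ?_))
    rw [hB, le_div_iff₀ h0, Real.norm_eq_abs, mul_comm]
    exact le_trans (mul_le_mul_of_nonneg_right hlt.le (abs_nonneg _)) (fekete_le hpos hM hb r i)
  obtain ⟨r, hr⟩ := hcont.exists_forall_ge' r₀ hev
  refine ⟨r, fun i j hij => ?_, hr⟩
  by_contra hne
  have : fekete u r = 0 := by
    rw [fekete, Finset.prod_eq_zero (Finset.mem_univ i), zero_div]
    exact Finset.prod_eq_zero (Finset.mem_erase.2 ⟨Ne.symm hne, Finset.mem_univ j⟩)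
      (by rw [hij]; ring)
  have := hr r₀
  linarith

lemma fekete_update {n : ℕ} (u : ℝ[X]) (r : Fin n → ℝ) (i : Fin n) (t : ℝ) :
    fekete u (Function.update r i t)
      = ((∏ l ∈ Finset.univ.erase i, ∏ j ∈ (Finset.univ.erase l).erase i, (r l - r j) ^ 2)
          / ∏ l ∈ Finset.univ.erase i, (u.eval (r l)) ^ 2)
        * ((cof r i).eval t ^ 4 / u.eval t ^ 2) := by
  have hs : ∀ l ∈ Finset.univ.erase i, Function.update r i t l = r l := fun l hl =>
    Function.update_of_ne (Finset.ne_of_mem_erase hl) _ _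
  rw [fekete, ← Finset.mul_prod_erase Finset.univ _ (Finset.mem_univ i),
    ← Finset.mul_prod_erase Finset.univ (fun l => (u.eval (Function.update r i t l)) ^ 2)
      (Finset.mem_univ i)]
  simp only [Function.update_self]
  have e1 : ∏ j ∈ Finset.univ.erase i, (t - Function.update r i t j) ^ 2
      = (cof r i).eval t ^ 2 := by
    rw [cof_eval, ← Finset.prod_pow]
    exact Finset.prod_congr rfl fun j hj => by rw [hs j hj]
  have e2 : ∏ l ∈ Finset.univ.erase i, (u.eval (Function.update r i t l)) ^ 2
      = ∏ l ∈ Finset.univ.erase i, (u.eval (r l)) ^ 2 :=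
    Finset.prod_congr rfl fun j hj => by rw [hs j hj]
  have e3 : ∏ l ∈ Finset.univ.erase i, ∏ j ∈ Finset.univ.erase l,
        (Function.update r i t l - Function.update r i t j) ^ 2
      = (cof r i).eval t ^ 2 *
        ∏ l ∈ Finset.univ.erase i, ∏ j ∈ (Finset.univ.erase l).erase i, (r l - r j) ^ 2 := by
    rw [cof_eval, ← Finset.prod_pow, ← Finset.prod_mul_distrib]
    refine Finset.prod_congr rfl fun l hl => ?_
    have hil : i ∈ Finset.univ.erase l :=
      Finset.mem_erase.2 ⟨(Finset.ne_of_mem_erase hl).symm, Finset.mem_univ _⟩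
    rw [← Finset.mul_prod_erase _ _ hil, Function.update_self, hs l hl]
    congr 1
    · ring
    · exact Finset.prod_congr rfl fun j hj => by
        rw [Function.update_of_ne (Finset.ne_of_mem_erase hj)]
  rw [e1, e2, e3, div_mul_div_comm]
  congr 1 <;> ring

/-- The equilibrium condition `u'(rᵢ) / u(rᵢ) = 2 qᵢ'(rᵢ) / qᵢ(rᵢ)` at a maximizer. -/
lemma fekete_critical {n : ℕ} {u : ℝ[X]} (hpos : ∀ x, 0 < u.eval x) {r : Fin n → ℝ}
    (hr : Function.Injective r) (hmax : ∀ s : Fin n → ℝ, fekete u s ≤ fekete u r) (i : Fin n) :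
    2 * (derivative (cof r i)).eval (r i) * u.eval (r i)
      = (cof r i).eval (r i) * (derivative u).eval (r i) := by
  have hK : 0 < (∏ l ∈ Finset.univ.erase i, ∏ j ∈ (Finset.univ.erase l).erase i,
      (r l - r j) ^ 2) / ∏ l ∈ Finset.univ.erase i, (u.eval (r l)) ^ 2 := by
    refine div_pos (Finset.prod_pos fun l _ => Finset.prod_pos fun j hj => ?_)
      (Finset.prod_pos fun l _ => pow_pos (hpos _) 2)
    have hjl : j ≠ l := Finset.ne_of_mem_erase (Finset.mem_of_mem_erase hj)
    have : r l - r j ≠ 0 := sub_ne_zero.2 fun h => hjl (hr h).symm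
    positivity
  have hloc : IsLocalMax (fun t => (cof r i).eval t ^ 4 / u.eval t ^ 2) (r i) := by
    refine Eventually.of_forall fun t => ?_
    have h := hmax (Function.update r i t)
    have h2 := fekete_update u r i (r i)
    rw [Function.update_eq_self] at h2
    rw [h2, fekete_update] at h
    exact le_of_mul_le_mul_left h hK
  have hu0 := (hpos (r i)).ne'
  have hc0 := cof_eval_self_ne_zero hr i
  have hd := (((cof r i).hasDerivAt (r i)).pow 4).div ((u.hasDerivAt (r i)).pow 2)
    (pow_ne_zero 2 hu0)
  have hz := hloc.hasDerivAt_eq_zero hd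
  rw [div_eq_zero_iff] at hz
  rcases hz with hz | hz
  · simp only [Pi.pow_apply] at hz
    norm_num at hz
    have : 2 * (cof r i).eval (r i) ^ 3 * u.eval (r i) *
      (2 * (derivative (cof r i)).eval (r i) * u.eval (r i)
      - (cof r i).eval (r i) * (derivative u).eval (r i)) = 0 := by linarith
    rcases mul_eq_zero.1 this with h | h
    · exact absurd h (by positivity)
    · linarith
  · exact absurd hz (pow_ne_zero 2 (pow_ne_zero 2 hu0))

lemma X_sub_C_sq_dvd {f : ℝ[X]} {x : ℝ} (h0 : f.eval x = 0) (h1 : (derivative f).eval x = 0) :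
    (X - C x) ^ 2 ∣ f := by
  obtain ⟨g, rfl⟩ := dvd_iff_isRoot.2 h0
  have : g.eval x = 0 := by simpa [derivative_mul] using h1
  rw [sq]
  exact mul_dvd_mul_left _ (dvd_iff_isRoot.2 this)

/-- With `cᵢ = u(rᵢ) / qᵢ(rᵢ)²` at a maximizer `r`, the difference of the two sides has a double zero at
each `rᵢ`, the derivative vanishing by the equilibrium condition; its degree is less than `2n`. -/
lemma exists_representation_injective {n : ℕ} {u : ℝ[X]} (hu : u.Monic)
    (hdeg : u.natDegree = 2 * n) (hpos : ∀ x, 0 < u.eval x) :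
    ∃ r c : Fin n → ℝ, Function.Injective r ∧ (∀ i, 0 < c i) ∧
      u = rootPoly r ^ 2 + ∑ i, C (c i) * cof r i ^ 2 := by
  obtain ⟨r, hr, hmax⟩ := exists_fekete_max hu hdeg hpos
  have hc0 := cof_eval_self_ne_zero hr
  refine ⟨r, fun i => u.eval (r i) / (cof r i).eval (r i) ^ 2, hr, fun i => ?_, ?_⟩
  · have := hc0 i
    have := hpos (r i)
    positivity
  rw [← sub_eq_zero]
  set S : ℝ[X] := ∑ i, C (u.eval (r i) / (cof r i).eval (r i) ^ 2) * cof r i ^ 2 with hS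
  refine eq_zero_of_dvd_of_degree_lt (p := rootPoly r ^ 2) ?_ ?_
  · have hprod : rootPoly r ^ 2 = ∏ i, (X - C (r i)) ^ 2 := by rw [rootPoly, Finset.prod_pow]
    rw (occs := .pos [1]) [hprod]
    refine Finset.prod_dvd_of_coprime (fun i _ j _ hij => ?_) fun i _ => ?_
    · exact (pairwise_coprime_X_sub_C hr hij).pow
    · have hd : ∀ j ≠ i, (X - C (r i)) ^ 2 ∣ cof r j ^ 2 := fun j hj =>
        pow_dvd_pow_of_dvd (dvd_iff_isRoot.2 (cof_eval_ne r hj)) 2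
      have hS' : S = C (u.eval (r i) / (cof r i).eval (r i) ^ 2) * cof r i ^ 2
          + ∑ j ∈ Finset.univ.erase i,
            C (u.eval (r j) / (cof r j).eval (r j) ^ 2) * cof r j ^ 2 :=
        (Finset.add_sum_erase Finset.univ _ (Finset.mem_univ i)).symm
      have hsplit : u - (rootPoly r ^ 2 + S)
          = (u - C (u.eval (r i) / (cof r i).eval (r i) ^ 2) * cof r i ^ 2)
            - (rootPoly r ^ 2 + ∑ j ∈ Finset.univ.erase i,
              C (u.eval (r j) / (cof r j).eval (r j) ^ 2) * cof r j ^ 2) := by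
        rw [hS']; ring
      rw [hsplit]
      refine dvd_sub (X_sub_C_sq_dvd ?_ ?_) (dvd_add ?_ ?_)
      · have := hc0 i
        simp only [eval_sub, eval_mul, eval_C, eval_pow]
        field_simp
        ring
      · have h1 := hc0 i
        have h2 := fekete_critical hpos hr hmax i
        simp only [derivative_sub, derivative_mul, derivative_C, derivative_pow, eval_sub,
          eval_mul, eval_C, eval_add, eval_pow]
        field_simp
        simp
        linear_combination (-(cof r i).eval (r i)) * h2
      · exact pow_dvd_pow_of_dvd (dvd_iff_isRoot.2 (rootPoly_eval_self r i)) 2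
      · exact Finset.dvd_sum fun j hj => (hd j (Finset.ne_of_mem_erase hj)).mul_left _
  · have hm := wronskian_form_monic r fun i => u.eval (r i) / (cof r i).eval (r i) ^ 2
    have hd := wronskian_form_natDegree r fun i => u.eval (r i) / (cof r i).eval (r i) ^ 2
    rw [← hS] at hm hd
    have hq : (rootPoly r ^ 2).degree = u.degree := by
      rw [degree_eq_natDegree hu.ne_zero, hdeg,
        degree_eq_natDegree ((rootPoly_monic r).pow 2).ne_zero,
        (rootPoly_monic r).natDegree_pow, rootPoly_natDegree]
    rw [hq]
    refine degree_sub_lt_left ?_ hu.ne_zero (by rw [hu.leadingCoeff, hm.leadingCoeff])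
    rw [degree_eq_natDegree hu.ne_zero, degree_eq_natDegree hm.ne_zero, hdeg, hd]

lemma cof_comp_equiv {n : ℕ} (r : Fin n → ℝ) (σ : Equiv.Perm (Fin n)) (i : Fin n) :
    cof (r ∘ σ) i = cof r (σ i) := by
  unfold cof
  refine Finset.prod_equiv σ (fun j => ?_) fun j _ => rfl
  simp

lemma exists_representation {n : ℕ} {u : ℝ[X]} (hu : u.Monic)
    (hdeg : u.natDegree = 2 * n) (hpos : ∀ x, 0 < u.eval x) :
    ∃ r c : Fin n → ℝ, StrictMono r ∧ (∀ i, 0 < c i) ∧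
      u = rootPoly r ^ 2 + ∑ i, C (c i) * cof r i ^ 2 := by
  obtain ⟨r, c, hr, hc, h⟩ := exists_representation_injective hu hdeg hpos
  set σ := Tuple.sort r
  refine ⟨r ∘ σ, c ∘ σ, (Tuple.monotone_sort r).strictMono_of_injective
    (hr.comp σ.injective), fun i => hc _, ?_⟩
  have h1 : rootPoly (r ∘ σ) = rootPoly r := Equiv.prod_comp σ fun j => X - C (r j)
  simp only [cof_comp_equiv, h1, Function.comp]
  rw [h, Equiv.sum_comp σ fun i => C (c i) * cof r i ^ 2]

/-! ### Interlacing and partial fractions -/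

lemma sum_cof_degree_lt {n : ℕ} (r c : Fin n → ℝ) :
    (∑ i, C (c i) * cof r i).degree < n := by
  refine lt_of_le_of_lt (degree_sum_le _ _) ((Finset.sup_lt_iff (WithBot.bot_lt_coe _)).2
    fun i _ => lt_of_le_of_lt (degree_mul_le _ _)
      (lt_of_le_of_lt (add_le_add_left degree_C_le _) ?_))
  rw [zero_add]
  exact cof_degree_lt r i

lemma pickPoly_monic_natDegree {n : ℕ} (a : ℝ) (r c : Fin n → ℝ) :
    (pickPoly a r c).Monic ∧ (pickPoly a r c).natDegree = n + 1 := by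
  have hm : ((X + C a) * rootPoly r).Monic := (monic_X_add_C a).mul (rootPoly_monic r)
  have hd : ((X + C a) * rootPoly r).natDegree = n + 1 := by
    rw [(monic_X_add_C a).natDegree_mul (rootPoly_monic r), natDegree_X_add_C,
      rootPoly_natDegree, add_comm]
  have hlt : (∑ i, C (c i) * cof r i).degree < ((X + C a) * rootPoly r).degree := by
    rw [degree_eq_natDegree hm.ne_zero, hd]
    exact (sum_cof_degree_lt r c).trans (by exact_mod_cast Nat.lt_succ_self n)
  refine ⟨hm.sub_of_left hlt, ?_⟩
  rw [pickPoly, natDegree_eq_of_degree_eq (degree_sub_eq_left_of_degree_lt hlt), hd]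

/-- Pairing the root `p (i.castSucc.succAbove j)` with the node `r j` makes every factor of the
product with `j ≠ i` positive; the two roots adjacent to `r i` give the sign. -/
lemma eval_mul_cof_neg_of_interlacing {n : ℕ} {p : Fin (n + 1) → ℝ} {r : Fin n → ℝ}
    (hr : StrictMono r)
    (h : ∀ i : Fin n, p i.castSucc < r i ∧ r i < p i.succ) (i : Fin n) :
    (rootPoly p).eval (r i) * (cof r i).eval (r i) < 0 := by
  have hsplit : (rootPoly p).eval (r i) * (cof r i).eval (r i)
      = ((r i - p i.castSucc) * (r i - p i.succ)) *
        ∏ j ∈ Finset.univ.erase i, ((r i - p (i.castSucc.succAbove j)) * (r i - r j)) := by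
    rw [rootPoly_eval, cof_eval, Fin.prod_univ_succAbove _ i.castSucc,
      ← Finset.mul_prod_erase Finset.univ _ (Finset.mem_univ i), Finset.prod_mul_distrib,
      Fin.succAbove_castSucc_self]
    ring
  rw [hsplit]
  refine mul_neg_of_neg_of_pos
    (mul_neg_of_pos_of_neg (sub_pos.2 (h i).1) (sub_neg.2 (h i).2))
    (Finset.prod_pos fun j hj => ?_)
  rcases lt_or_gt_of_ne (Finset.ne_of_mem_erase hj) with hji | hij
  · rw [Fin.succAbove_of_castSucc_lt _ _ (by simpa using hji)]
    exact mul_pos (sub_pos.2 ((h j).1.trans (hr hji))) (sub_pos.2 (hr hji))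
  · rw [Fin.succAbove_of_le_castSucc _ _ (by simpa using hij.le)]
    exact mul_pos_of_neg_of_neg (sub_neg.2 ((hr hij).trans (h j).2)) (sub_neg.2 (hr hij))

/-- Partial fractions: interlacing makes each residue `p(rᵢ) / qᵢ(rᵢ)` of `p / q` negative. -/
lemma exists_pickPoly_of_interlacing {n : ℕ} {p : Fin (n + 1) → ℝ} {r : Fin n → ℝ}
    (hr : StrictMono r)
    (h : ∀ i : Fin n, p i.castSucc < r i ∧ r i < p i.succ) :
    ∃ (a : ℝ) (c : Fin n → ℝ), (∀ i, 0 < c i) ∧ rootPoly p = pickPoly a r c := by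
  have hc0 := cof_eval_self_ne_zero hr.injective
  set c : Fin n → ℝ := fun i => -((rootPoly p).eval (r i) / (cof r i).eval (r i)) with hc
  have hcpos : ∀ i, 0 < c i := fun i => by
    have h1 := eval_mul_cof_neg_of_interlacing hr h i
    rw [hc]
    refine neg_pos.2 ?_
    rcases mul_neg_iff.1 h1 with h2 | h2
    · exact div_neg_of_pos_of_neg h2.1 h2.2
    · exact div_neg_of_neg_of_pos h2.1 h2.2
  have hdvd : rootPoly r ∣ rootPoly p - pickPoly 0 r c := by
    refine Finset.prod_dvd_of_coprime
      (fun i _ j _ hij => pairwise_coprime_X_sub_C hr.injective hij) fun i _ => ?_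
    rw [dvd_iff_isRoot, IsRoot.def, eval_sub, pickPoly_eval_node]
    have := hc0 i
    simp only [hc]
    field_simp
    ring
  obtain ⟨g, hg⟩ := hdvd
  obtain ⟨hm, hd⟩ := pickPoly_monic_natDegree 0 r c
  have hlt : (rootPoly p - pickPoly 0 r c).degree < ((n + 1 : ℕ) : WithBot ℕ) := by
    have := degree_sub_lt_left (p := rootPoly p) (q := pickPoly 0 r c) (by
      rw [degree_eq_natDegree hm.ne_zero, degree_eq_natDegree (rootPoly_monic p).ne_zero, hd,
        rootPoly_natDegree]) (rootPoly_monic p).ne_zero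
      (by rw [hm.leadingCoeff, (rootPoly_monic p).leadingCoeff])
    rwa [degree_eq_natDegree (rootPoly_monic p).ne_zero, rootPoly_natDegree] at this
  have hg0 : g.natDegree = 0 := by
    by_cases hgz : g = 0
    · simp [hgz]
    rw [hg, degree_eq_natDegree (mul_ne_zero (rootPoly_monic r).ne_zero hgz),
      (rootPoly_monic r).natDegree_mul' hgz, rootPoly_natDegree] at hlt
    have := Nat.cast_lt.1 hlt
    omega
  obtain ⟨a, ha⟩ := natDegree_eq_zero.1 hg0
  refine ⟨a, c, hcpos, ?_⟩
  rw [← ha, sub_eq_iff_eq_add] at hg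
  rw [hg, pickPoly, pickPoly, C_0]
  ring

lemma cof_sign {n : ℕ} {r : Fin n → ℝ} (hr : StrictMono r) (i : Fin n) :
    0 < (-1) ^ (n - 1 - i : ℕ) * (cof r i).eval (r i) := by
  have hu : Finset.univ.erase i = Finset.Iio i ∪ Finset.Ioi i := by
    ext j
    simp
  have hdisj : Disjoint (Finset.Iio i) (Finset.Ioi i) :=
    Finset.disjoint_left.2 fun j h1 h2 =>
      lt_asymm (Finset.mem_Iio.1 h1) (Finset.mem_Ioi.1 h2)
  have hneg : ∏ j ∈ Finset.Ioi i, (r i - r j)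
      = (-1) ^ (n - 1 - i : ℕ) * ∏ j ∈ Finset.Ioi i, (r j - r i) := by
    rw [← Fin.card_Ioi, ← Finset.prod_const, ← Finset.prod_mul_distrib]
    exact Finset.prod_congr rfl fun j _ => by ring
  have hsq : ((-1 : ℝ) ^ (n - 1 - i : ℕ)) * (-1) ^ (n - 1 - i : ℕ) = 1 := by
    rw [← mul_pow]; simp
  rw [cof_eval, hu, Finset.prod_union hdisj, hneg, mul_left_comm, ← mul_assoc (_ ^ _), hsq,
    one_mul]
  exact mul_pos (Finset.prod_pos fun j hj => sub_pos.2 (hr (Finset.mem_Iio.1 hj)))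
    (Finset.prod_pos fun j hj => sub_pos.2 (hr (Finset.mem_Ioi.1 hj)))

lemma exists_lt_sign {p : ℝ[X]} {m : ℕ} (hp : p.Monic) (hd : p.natDegree = m + 1) (B : ℝ) :
    ∃ x < B, 0 < (-1) ^ (m + 1) * p.eval x := by
  have hX : (-X : ℝ[X]).natDegree = 1 := by simp
  have hlc : (C ((-1) ^ (m + 1)) * p.comp (-X)).leadingCoeff = 1 := by
    rw [leadingCoeff_mul, leadingCoeff_C, leadingCoeff_comp (by rw [hX]; exact one_ne_zero),
      hp.leadingCoeff, hd, leadingCoeff_neg, leadingCoeff_X, one_mul, ← mul_pow]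
    simp
  have hdeg : (C ((-1) ^ (m + 1)) * p.comp (-X)).natDegree = m + 1 := by
    rw [natDegree_C_mul (pow_ne_zero _ (by norm_num)), natDegree_comp, hd, hX, mul_one]
  have hcomp := (C ((-1) ^ (m + 1)) * p.comp (-X)).tendsto_atTop_of_leadingCoeff_nonneg
    (natDegree_pos_iff_degree_pos.1 (by omega)) (by rw [hlc]; exact zero_le_one)
  obtain ⟨y, hy1, hy2⟩ := ((hcomp.eventually_gt_atTop 0).and (eventually_gt_atTop (-B))).exists
  exact ⟨-y, by linarith, by simpa using hy1⟩

lemma exists_gt_sign {p : ℝ[X]} {m : ℕ} (hp : p.Monic) (hd : p.natDegree = m + 1) (B : ℝ) :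
    ∃ x > B, 0 < p.eval x := by
  have hT := p.tendsto_atTop_of_leadingCoeff_nonneg
    (natDegree_pos_iff_degree_pos.1 (by omega)) (by rw [hp.leadingCoeff]; exact zero_le_one)
  obtain ⟨y, hy1, hy2⟩ := ((hT.eventually_gt_atTop 0).and (eventually_gt_atTop B)).exists
  exact ⟨y, hy2, hy1⟩

lemma exists_root_between {p : ℝ[X]} {x y : ℝ} (hxy : x < y) (h : p.eval x * p.eval y < 0) :
    ∃ z, x < z ∧ z < y ∧ p.eval z = 0 := by
  rcases mul_neg_iff.1 h with h1 | h1
  · obtain ⟨z, hz, hz0⟩ := intermediate_value_Ioo' hxy.le p.continuous.continuousOn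
      (Set.mem_Ioo.2 ⟨h1.2, h1.1⟩)
    exact ⟨z, hz.1, hz.2, hz0⟩
  · obtain ⟨z, hz, hz0⟩ := intermediate_value_Ioo hxy.le p.continuous.continuousOn
      (Set.mem_Ioo.2 h1)
    exact ⟨z, hz.1, hz.2, hz0⟩

lemma eq_rootPoly_of_roots {n : ℕ} {p : ℝ[X]} (hp : p.Monic) (hd : p.natDegree = n)
    {s : Fin n → ℝ} (hs : Function.Injective s) (h : ∀ i, p.eval (s i) = 0) : p = rootPoly s := by
  rw [← sub_eq_zero]
  refine eq_zero_of_dvd_of_degree_lt (p := rootPoly s) ?_ ?_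
  · refine dvd_sub ?_ dvd_rfl
    exact Finset.prod_dvd_of_coprime (fun i _ j _ hij => pairwise_coprime_X_sub_C hs hij)
      fun i _ => dvd_iff_isRoot.2 (h i)
  · have he : p.degree = (rootPoly s).degree := by
      rw [degree_eq_natDegree hp.ne_zero, degree_eq_natDegree (rootPoly_monic s).ne_zero, hd,
        rootPoly_natDegree]
    rw [← he]
    exact degree_sub_lt_left he hp.ne_zero (by rw [hp.leadingCoeff, (rootPoly_monic s).leadingCoeff])

/-- The signs of `p` alternate along the nodes, together with a point far to the left and one far to
the right, and each sign change gives a root. -/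
lemma interlacing_of_pickPoly {n : ℕ} (hn : 0 < n) (a : ℝ) {r c : Fin n → ℝ} (hr : StrictMono r)
    (hc : ∀ i, 0 < c i) :
    ∃ p : Fin (n + 1) → ℝ, StrictMono p ∧
      (∀ i : Fin n, p i.castSucc < r i ∧ r i < p i.succ) ∧ pickPoly a r c = rootPoly p := by
  obtain ⟨hm, hd⟩ := pickPoly_monic_natDegree a r c
  set P := pickPoly a r c with hP
  obtain ⟨x₀, hx₀, hs₀⟩ := exists_lt_sign hm hd (r ⟨0, hn⟩)
  obtain ⟨x₁, hx₁, hs₁⟩ := exists_gt_sign hm hd (r ⟨n - 1, by omega⟩)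
  -- The points `x₀ < r 0 < ⋯ < r (n - 1) < x₁`, indexed by `0, …, n + 1`.
  let e : ℕ → ℝ := fun m => if m = 0 then x₀ else if h : m - 1 < n then r ⟨m - 1, h⟩ else x₁
  have e0 : e 0 = x₀ := by simp [e]
  have ei : ∀ i : Fin n, e (i + 1) = r i := fun i => by simp [e]
  have en : e (n + 1) = x₁ := by simp [e]
  have hsign : ∀ m ≤ n + 1, 0 < (-1) ^ (n + 1 - m) * P.eval (e m) := by
    intro m hmn
    rcases Nat.eq_zero_or_pos m with rfl | hmpos
    · simpa [e0] using hs₀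
    rcases hmn.lt_or_eq with hlt | rfl
    · obtain ⟨i, rfl⟩ : ∃ i : Fin n, m = i + 1 := ⟨⟨m - 1, by omega⟩, by simp; omega⟩
      have h1 := mul_pos (hc i) (cof_sign hr i)
      have h2 : n + 1 - ((i : ℕ) + 1) = (n - 1 - i) + 1 := by omega
      rw [ei, hP, pickPoly_eval_node, h2, pow_succ]
      linarith
    · simpa [en] using hs₁
  have hlt : ∀ m ≤ n, e m < e (m + 1) := by
    intro m hmn
    rcases Nat.eq_zero_or_pos m with rfl | hmpos
    · rw [e0, show (0 + 1) = ((⟨0, hn⟩ : Fin n) : ℕ) + 1 from rfl, ei]; exact hx₀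
    obtain ⟨i, rfl⟩ : ∃ i : Fin n, m = i + 1 := ⟨⟨m - 1, by omega⟩, by simp; omega⟩
    rcases hmn.lt_or_eq with hlt | heq
    · rw [ei, show (i : ℕ) + 1 + 1 = ((⟨i + 1, hlt⟩ : Fin n) : ℕ) + 1 from rfl, ei]
      exact hr (Fin.lt_def.2 (Nat.lt_succ_self _))
    · rw [ei, heq, en]
      have : i = ⟨n - 1, by omega⟩ := Fin.ext (by simp; omega)
      rw [this]; exact hx₁
  have hroot : ∀ m : Fin (n + 1), ∃ z, e m < z ∧ z < e (m + 1) ∧ P.eval z = 0 := fun m => by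
    have hm' := m.2
    refine exists_root_between (hlt m (by omega)) ?_
    have h1 := mul_pos (hsign m (by omega)) (hsign (m + 1) (by omega))
    have h2 : n + 1 - (m : ℕ) = (n + 1 - (m + 1)) + 1 := by omega
    rw [h2, pow_succ] at h1
    have hsq : ((-1 : ℝ) ^ (n + 1 - (m + 1) : ℕ)) * (-1) ^ (n + 1 - (m + 1) : ℕ) = 1 := by
      rw [← mul_pow]; simp
    nlinarith
  choose s hs1 hs2 hs3 using hroot
  have hsmono : StrictMono s := by
    refine Fin.strictMono_iff_lt_succ.2 fun i => ?_
    have h1 := hs2 i.castSucc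
    have h2 := hs1 i.succ
    simp only [Fin.val_castSucc, Fin.val_succ] at h1 h2
    exact h1.trans h2
  refine ⟨s, hsmono, fun i => ⟨?_, ?_⟩, eq_rootPoly_of_roots hm hd hsmono.injective hs3⟩
  · have := hs2 i.castSucc
    simpa [ei] using this
  · have := hs1 i.succ
    simpa [ei] using this

/-! ### The bijection -/

lemma pickPoly_coeff {n : ℕ} (hn : 0 < n) (a : ℝ) (r c : Fin n → ℝ) :
    (pickPoly a r c).coeff n = (rootPoly r).coeff (n - 1) + a := by
  have h1 := rootPoly_coeff r
  have h2 : (∑ i, C (c i) * cof r i).coeff n = 0 :=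
    coeff_eq_zero_of_degree_lt (sum_cof_degree_lt r c)
  obtain ⟨m, rfl⟩ : ∃ m, n = m + 1 := ⟨n - 1, by omega⟩
  rw [pickPoly, coeff_sub, h2, add_mul, coeff_add, coeff_X_mul, coeff_C_mul, h1]
  simp

theorem stmt8 (k : ℕ) (hk : 2 ≤ k) :
    Set.BijOn
      (fun pq : Polynomial ℝ × Polynomial ℝ =>
        derivative pq.1 * pq.2 - derivative pq.2 * pq.1)
      {pq : Polynomial ℝ × Polynomial ℝ |
        ∃ pr : Fin k → ℝ, ∃ qr : Fin (k - 1) → ℝ,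
          StrictMono pr ∧ StrictMono qr ∧
          (∀ i : Fin (k - 1), pr (finLo i) < qr i ∧ qr i < pr (finHi i)) ∧
          pq.1 = rootPoly pr ∧ pq.2 = rootPoly qr ∧ pq.1.coeff (k - 1) = 0}
      {u : Polynomial ℝ | u.Monic ∧ u.natDegree = 2 * k - 2 ∧ ∀ x : ℝ, 0 < u.eval x} := by
  obtain ⟨n, rfl⟩ : ∃ n, k = n + 1 := ⟨k - 1, by omega⟩
  have hn : 0 < n := by omega
  refine ⟨?_, ?_, ?_⟩
  · rintro ⟨p, q⟩ ⟨pr, qr, hp, hq, hint, rfl, rfl, -⟩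
    obtain ⟨a, c, hc, hpick⟩ := exists_pickPoly_of_interlacing (n := n) hq hint
    have hW := pickPoly_wronskian (n := n) qr c a
    rw [← hpick] at hW
    refine ⟨?_, ?_, fun x => ?_⟩
    · have hm := wronskian_form_monic (n := n) qr c
      rw [← hW] at hm
      exact hm
    · exact (congrArg natDegree hW).trans (wronskian_form_natDegree (n := n) qr c)
    · have := bez_pos (n := n) hq.injective hc (x : ℂ)
      rw [bez_ofReal, ← hW] at this
      exact this
  · rintro ⟨p, q⟩ ⟨pr, qr, hp, hq, hint, rfl, rfl, h0⟩ ⟨P, Q⟩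
      ⟨Pr, Qr, hP, hQ, hInt, rfl, rfl, H0⟩ hW
    obtain ⟨a, c, hc, hpick⟩ := exists_pickPoly_of_interlacing (n := n) hq hint
    obtain ⟨b, d, hd, hPick⟩ := exists_pickPoly_of_interlacing (n := n) hQ hInt
    simp only at hW h0 H0
    rw [hpick, hPick] at hW
    obtain ⟨rfl, rfl⟩ := pickPoly_unique (n := n) hq hc hQ hd hW
    have hab : a = b := by
      rw [hpick] at h0
      rw [hPick] at H0
      have h1 := pickPoly_coeff (n := n) hn a qr c
      have h2 := pickPoly_coeff (n := n) hn b qr c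
      have h0' : (pickPoly a qr c).coeff n = 0 := h0
      have H0' : (pickPoly b qr c).coeff n = 0 := H0
      linarith
    rw [hpick, hPick, hab]
  · rintro u ⟨hu, hdeg, hpos⟩
    obtain ⟨r, c, hr, hc, hrep⟩ := exists_representation (n := n) hu (by omega) hpos
    obtain ⟨p, hp, hint, hpick⟩ :=
      interlacing_of_pickPoly hn (-(rootPoly r).coeff (n - 1)) hr hc
    refine ⟨(rootPoly p, rootPoly r), ⟨p, r, hp, hr, hint, rfl, rfl, ?_⟩, ?_⟩
    · rw [← hpick]
      exact (pickPoly_coeff hn _ r c).trans (by ring)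
    · simp only [← hpick]
      rw [pickPoly_wronskian, ← hrep]
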